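/- Let Ω ⊆ ℂⁿ be a bounded convex domain and τ a holomorphic automorphism of Ω. Then the following are equivalent: (1) τ is a generalized translation; (2) τ has no fixed points in Ω; (3) the sequence of iterates {τʲ}_{j≥1} is compactly divergent, i.e. for every compact K ⊆ Ω there exists N such that τʲ(K) ∩ K = ∅ for all j ≥ N. -/

import Mathlib

open scoped Manifold Topology
open Set Metric Filter

noncomputable section

/-- The complex Euclidean space `ℂⁿ`. -/
abbrev CSpace (n : ℕ) : Type := EuclideanSpace ℂ (Fin n)

/-- The `𝒪(Ω)`-convex hull of a set `K ⊆ Ω`. -/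
def OHull {n : ℕ} (Ω K : Set (CSpace n)) : Set (CSpace n) :=
  {x ∈ Ω | ∀ f : CSpace n → ℂ, DifferentiableOn ℂ f Ω → ‖f x‖ ≤ ⨆ y : K, ‖f ↑y‖}

/-- `τ` is a generalized translation of `Ω`: for every compact `𝒪(Ω)`-convex `K ⊆ Ω` there is
`j ≥ 1` with `τʲ(K) ∩ K = ∅` and `τʲ(K) ∪ K` again `𝒪(Ω)`-convex. -/
def IsGenTranslation {n : ℕ} (Ω : Set (CSpace n)) (τ : CSpace n → CSpace n) : Prop :=
  ∀ K : Set (CSpace n), IsCompact K → K ⊆ Ω → OHull Ω K = K →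
    ∃ j : ℕ, 1 ≤ j ∧ (τ^[j] '' K) ∩ K = ∅ ∧
      OHull Ω ((τ^[j] '' K) ∪ K) = (τ^[j] '' K) ∪ K

section Segments

variable {E : Type*} [NormedAddCommGroup E] [NormedSpace ℝ E]

/-- The union of all segments between points of a compact set is compact. -/
lemma isCompact_image_lineMap {K : Set E} (hK : IsCompact K) :
    IsCompact ((fun p : ℝ × E × E => AffineMap.lineMap p.2.1 p.2.2 p.1) ''
      (Icc (0 : ℝ) 1 ×ˢ K ×ˢ K)) := by
  refine (isCompact_Icc.prod (hK.prod hK)).image ?_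
  simp only [AffineMap.lineMap_apply_module]
  fun_prop

/-- A convex open set contains a uniform neighbourhood of the segments joining points of a
compact subset. -/
lemma exists_ball_lineMap_subset {Ω K : Set E} (hΩo : IsOpen Ω) (hΩc : Convex ℝ Ω)
    (hK : IsCompact K) (hKΩ : K ⊆ Ω) :
    ∃ ε > 0, ∀ x ∈ K, ∀ y ∈ K, ∀ t ∈ Icc (0 : ℝ) 1, ball (AffineMap.lineMap x y t) ε ⊆ Ω := by
  obtain ⟨ε, hε, h⟩ := (isCompact_image_lineMap hK).exists_thickening_subset_open hΩo (by
    rintro _ ⟨⟨t, x, y⟩, ⟨ht, hx, hy⟩, rfl⟩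
    exact hΩc.lineMap_mem (hKΩ hx) (hKΩ hy) ht)
  refine ⟨ε, hε, fun x hx y hy t ht => ?_⟩
  exact (ball_subset_thickening
    (mem_image_of_mem (fun p : ℝ × E × E => AffineMap.lineMap p.2.1 p.2.2 p.1)
      (show (t, x, y) ∈ Icc (0 : ℝ) 1 ×ˢ K ×ˢ K from ⟨ht, hx, hy⟩)) ε).trans h

end Segments

section PositiveRealPart

variable {E : Type*} [NormedAddCommGroup E] [NormedSpace ℂ E]

/-- Holomorphic functions on `Ω` with nonnegative real part. -/
def HolNonneg (Ω : Set E) (h : E → ℂ) : Prop :=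
  DifferentiableOn ℂ h Ω ∧ ∀ x ∈ Ω, 0 ≤ (h x).re

/-- Holomorphic functions on `Ω` with real part in `[0, 1]`. -/
def HolStrip (Ω : Set E) (h : E → ℂ) : Prop :=
  DifferentiableOn ℂ h Ω ∧ ∀ x ∈ Ω, 0 ≤ (h x).re ∧ (h x).re ≤ 1

lemma HolStrip.holNonneg {Ω : Set E} {h : E → ℂ} (hh : HolStrip Ω h) : HolNonneg Ω h :=
  ⟨hh.1, fun x hx => (hh.2 x hx).1⟩

lemma HolStrip.one_sub_holNonneg {Ω : Set E} {h : E → ℂ} (hh : HolStrip Ω h) :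
    HolNonneg Ω (fun x => 1 - h x) :=
  ⟨hh.1.const_sub 1, fun x hx => by simpa using (hh.2 x hx).2⟩

lemma HolNonneg.comp {F : Type*} [NormedAddCommGroup F] [NormedSpace ℂ F] {Ω : Set E} {U : Set F}
    {h : E → ℂ} {φ : F → E} (hh : HolNonneg Ω h) (hφ : DifferentiableOn ℂ φ U)
    (hm : MapsTo φ U Ω) : HolNonneg U (fun z => h (φ z)) :=
  ⟨hh.1.comp hφ hm, fun _ hz => hh.2 _ (hm hz)⟩

lemma HolStrip.comp {Ω : Set E} {h : E → ℂ} {φ : E → E} (hh : HolStrip Ω h)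
    (hφ : DifferentiableOn ℂ φ Ω) (hm : MapsTo φ Ω Ω) : HolStrip Ω (fun z => h (φ z)) :=
  ⟨hh.1.comp hφ hm, fun _ hz => hh.2 _ (hm hz)⟩

/-- Borel–Carathéodory estimate on a ball for functions with nonnegative real part. -/
lemma HolNonneg.norm_sub_le {Ω : Set E} {h : E → ℂ} (hh : HolNonneg Ω h) {a b : E} {R : ℝ}
    (hR : ball a R ⊆ Ω) (hb : ‖b - a‖ < R) :
    ‖h b - h a‖ ≤ 2 * (h a).re * ‖b - a‖ / (R - ‖b - a‖) := by
  rcases eq_or_ne b a with rfl | hab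
  · simp
  have hpos : 0 < ‖b - a‖ := norm_pos_iff.mpr (sub_ne_zero.mpr hab)
  have hR0 : 0 < R := hpos.trans hb
  have ha : 0 ≤ (h a).re := hh.2 a (hR (mem_ball_self hR0))
  set v : E := ((‖b - a‖⁻¹ : ℝ) : ℂ) • (b - a) with hv
  have hv1 : ‖v‖ = 1 := by
    rw [hv, norm_smul, Complex.norm_real, norm_inv, norm_norm, inv_mul_cancel₀ hpos.ne']
  set γ : ℂ → E := fun ζ => a + ζ • v with hγ
  have hγd : Differentiable ℂ γ := by rw [hγ]; fun_prop
  have hmaps : MapsTo γ (ball 0 R) Ω := by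
    intro ζ hζ
    apply hR
    rw [mem_ball_zero_iff] at hζ
    simpa [hγ, mem_ball, dist_eq_norm, norm_smul, hv1] using hζ
  have hb' : γ (‖b - a‖ : ℂ) = b := by
    have : ((‖b - a‖ : ℝ) : ℂ) ≠ 0 := by exact_mod_cast hpos.ne'
    simp only [hγ, hv, smul_smul]
    rw [Complex.ofReal_inv, mul_inv_cancel₀ this]
    simp
  have key : ∀ M : ℝ, 0 < M → (h a).re ≤ M →
      ‖h b - h a‖ ≤ 2 * M * ‖b - a‖ / (R - ‖b - a‖) := by
    intro M hM haM
    have := Complex.borelCaratheodory_zero (f := fun ζ => h a - h (γ ζ)) (M := M) (R := R)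
      (z := (‖b - a‖ : ℂ)) hM ((hh.1.comp hγd.differentiableOn hmaps).const_sub _)
      (fun ζ hζ => by
        have := hh.2 _ (hmaps hζ)
        simp only [Set.mem_ofPred_eq, Complex.sub_re]; linarith) hR0
      (by simpa using hb) (by simp [hγ])
    rw [hb', norm_sub_rev] at this
    simpa using this
  have hcont : Tendsto (fun M : ℝ => 2 * M * ‖b - a‖ / (R - ‖b - a‖)) (𝓝[>] (h a).re)
      (𝓝 (2 * (h a).re * ‖b - a‖ / (R - ‖b - a‖))) := by
    apply tendsto_nhdsWithin_of_tendsto_nhds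
    exact Continuous.tendsto (by fun_prop) _
  refine ge_of_tendsto hcont ?_
  filter_upwards [self_mem_nhdsWithin] with M hM
  exact key M (ha.trans_lt hM) (le_of_lt hM)

/-- Harnack's inequality on compact subsets of a convex open set. -/
lemma exists_harnack [NormedSpace ℝ E] {Ω K : Set E} (hΩo : IsOpen Ω) (hΩc : Convex ℝ Ω)
    (hK : IsCompact K) (hKΩ : K ⊆ Ω) :
    ∃ C > 1, ∀ h, HolNonneg Ω h → ∀ x ∈ K, ∀ y ∈ K,
      (h y).re ≤ C * (h x).re ∧ ‖h y‖ ≤ C * ‖h x‖ := by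
  obtain ⟨ε, hε, hball⟩ := exists_ball_lineMap_subset hΩo hΩc hK hKΩ
  obtain ⟨D, hD⟩ := Metric.isBounded_iff.mp hK.isBounded
  obtain ⟨N, hN⟩ := exists_nat_gt (5 * D / ε)
  refine ⟨(3 / 2) ^ (N + 1), one_lt_pow₀ (by norm_num) (by simp), fun h hh x hx y hy => ?_⟩
  have hxy : ‖y - x‖ ≤ D := by rw [← dist_eq_norm]; exact hD hy hx
  set P : ℕ → E := fun k => AffineMap.lineMap x y ((k : ℝ) / (N + 1)) with hP
  have hN1 : (0 : ℝ) < N + 1 := by positivity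
  have hmem : ∀ k ≤ N + 1, ((k : ℝ) / (N + 1)) ∈ Icc (0 : ℝ) 1 := fun k hk =>
    ⟨by positivity, by rw [div_le_one hN1]; exact_mod_cast hk⟩
  have hstep : ∀ k, ‖P (k + 1) - P k‖ ≤ ε / 5 := by
    intro k
    have : P (k + 1) - P k = (1 / ((N : ℝ) + 1)) • (y - x) := by
      simp only [hP, AffineMap.lineMap_apply_module']
      rw [add_sub_add_right_eq_sub, ← sub_smul]
      congr 1; push_cast; field_simp; ring
    rw [this, norm_smul, Real.norm_of_nonneg (by positivity)]
    rw [div_lt_iff₀ hε] at hN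
    rw [one_div, inv_mul_le_iff₀ hN1]
    nlinarith
  have hest : ∀ k, k + 1 ≤ N + 1 → ‖h (P (k + 1)) - h (P k)‖ ≤ (h (P k)).re / 2 := by
    intro k hk
    have hb := hball x hx y hy _ (hmem k (by omega))
    have hs := hstep k
    have h0 := hh.2 _ (hb (mem_ball_self hε))
    refine (hh.norm_sub_le hb (by linarith)).trans ?_
    change 0 ≤ (h (P k)).re at h0
    rw [div_le_iff₀ (by linarith)]
    nlinarith [norm_nonneg (P (k + 1) - P k)]
  have main : ∀ k, k ≤ N + 1 → (h (P k)).re ≤ (3 / 2) ^ k * (h x).re ∧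
      ‖h (P k)‖ ≤ (3 / 2) ^ k * ‖h x‖ := by
    intro k
    induction k with
    | zero => intro _; simp [hP]
    | succ k ih =>
      intro hk
      obtain ⟨i1, i2⟩ := ih (by omega)
      have e := hest k hk
      have e1 := (Complex.abs_re_le_norm _).trans e
      rw [Complex.sub_re, abs_le] at e1
      have e2 := norm_le_norm_add_norm_sub' (h (P (k + 1))) (h (P k))
      have e3 := Complex.re_le_norm (h (P k))
      rw [pow_succ]
      constructor <;> linarith
  have := main (N + 1) le_rfl
  have hend : P (N + 1) = y := by
    simp only [hP]; push_cast; rw [div_self hN1.ne']; simp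
  rwa [hend] at this

/-- Two points are `r`-close if no holomorphic function with real part in `[0, 1]` separates the
real parts of its values by more than `r`. -/
def StripClose (Ω : Set E) (r : ℝ) (x y : E) : Prop :=
  ∀ h, HolStrip Ω h → |(h x).re - (h y).re| ≤ r

lemma StripClose.map {Ω : Set E} {r : ℝ} {x y : E} (hxy : StripClose Ω r x y) {φ : E → E}
    (hφ : DifferentiableOn ℂ φ Ω) (hm : MapsTo φ Ω Ω) : StripClose Ω r (φ x) (φ y) :=
  fun _ hh => hxy _ (hh.comp hφ hm)

/-- On a bounded set the strip class controls the norm. -/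
lemma StripClose.norm_sub_le {Ω : Set E} {r M : ℝ} (hM : 0 < M) (hΩM : ∀ x ∈ Ω, ‖x‖ ≤ M)
    {x y : E} (hxy : StripClose Ω r x y) : ‖x - y‖ ≤ 2 * M * r := by
  obtain ⟨g, hg1, hg⟩ := exists_dual_vector'' ℂ (x - y)
  have key := hxy (fun z => (g z + M) * ((2 * M : ℝ) : ℂ)⁻¹) ⟨by fun_prop, fun z hz => by
    have h1 : |(g z).re| ≤ M := (Complex.abs_re_le_norm _).trans
      ((g.le_of_opNorm_le hg1 z).trans (by simpa using hΩM z hz))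
    rw [abs_le] at h1
    rw [← Complex.ofReal_inv, Complex.re_mul_ofReal, Complex.add_re, Complex.ofReal_re,
      ← div_eq_mul_inv]
    constructor
    · apply div_nonneg <;> linarith
    · rw [div_le_one (by linarith)]; linarith⟩
  simp only [← Complex.ofReal_inv, Complex.re_mul_ofReal, Complex.add_re, Complex.ofReal_re] at key
  have e : (g x).re - (g y).re = ‖x - y‖ := by
    rw [← Complex.sub_re, ← map_sub, hg]; simp
  rw [← sub_mul, add_sub_add_right_eq_sub, e, abs_of_nonneg (by positivity), ← div_eq_mul_inv,
    div_le_iff₀ (by positivity)] at key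
  linarith

/-- Functions in the strip class are uniformly equicontinuous on compact sets. -/
lemma exists_equicontinuous {Ω K : Set E} (hΩo : IsOpen Ω)
    (hK : IsCompact K) (hKΩ : K ⊆ Ω) {r : ℝ} (hr : 0 < r) :
    ∃ δ > 0, ∀ x ∈ K, ∀ y ∈ K, dist x y < δ → StripClose Ω r x y := by
  obtain ⟨ε, hε, hsub⟩ := hK.exists_thickening_subset_open hΩo hKΩ
  refine ⟨ε * r / (2 + r), by positivity, fun x _ y hy hxy h hh => ?_⟩
  have hb : ball y ε ⊆ Ω := (ball_subset_thickening hy ε).trans hsub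
  rw [dist_eq_norm, lt_div_iff₀ (by positivity)] at hxy
  have hlt : ‖x - y‖ < ε := by nlinarith [norm_nonneg (x - y)]
  rw [← Complex.sub_re]
  refine (Complex.abs_re_le_norm _).trans ((hh.holNonneg.norm_sub_le hb hlt).trans ?_)
  rw [div_le_iff₀ (by linarith)]
  have := hh.2 y (hKΩ hy)
  nlinarith [norm_nonneg (x - y)]

end PositiveRealPart

section Convex

variable {E : Type*} [NormedAddCommGroup E] [NormedSpace ℂ E]

/-- Points satisfying a Harnack inequality relative to a compact set stay in a compact set. -/
lemma exists_compact_of_harnack [NormedSpace ℝ E] [IsScalarTower ℝ ℂ E] [ProperSpace E]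
    {Ω K : Set E} (hΩo : IsOpen Ω) (hΩc : Convex ℝ Ω)
    (hΩb : Bornology.IsBounded Ω) (hK : IsCompact K) (hKΩ : K ⊆ Ω) {C : ℝ} (hC : 1 < C) :
    ∃ Q, IsCompact Q ∧ Q ⊆ Ω ∧ ∀ y ∈ K, ∀ x,
      (∀ h, HolNonneg Ω h → (h y).re ≤ C * (h x).re) → x ∈ Q := by
  have hC0 : 0 < C := by linarith
  have hκ1 : C⁻¹ < 1 := inv_lt_one_of_one_lt₀ hC
  have hκ0 : 0 < C⁻¹ := by positivity
  set κ := C⁻¹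
  refine ⟨(fun p : E × E => κ • p.1 + (1 - κ) • p.2) '' (K ×ˢ closure Ω),
    (hK.prod hΩb.isCompact_closure).image (by fun_prop), ?_, ?_⟩
  · rintro _ ⟨⟨y, w⟩, ⟨hy, hw⟩, rfl⟩
    have := hΩc.combo_interior_closure_mem_interior (by rw [hΩo.interior_eq]; exact hKΩ hy) hw
      hκ0 (by linarith : 0 ≤ 1 - κ) (by ring)
    rwa [hΩo.interior_eq] at this
  · intro y hy x H
    have hne : 1 - κ ≠ 0 := by linarith
    refine ⟨(y, (1 - κ)⁻¹ • (x - κ • y)), ⟨hy, ?_⟩, by simp [smul_smul, hne]⟩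
    set w := (1 - κ)⁻¹ • (x - κ • y) with hw
    have hx : x = κ • y + (1 - κ) • w := by simp [hw, smul_smul, hne]
    by_contra hwn
    obtain ⟨f, u, hfw, hfu⟩ := RCLike.geometric_hahn_banach_point_closed (𝕜 := ℂ)
      hΩc.closure isClosed_closure hwn
    have := H (fun z => f z - (u : ℂ)) ⟨by fun_prop, fun z hz => by
      have := hfu z (subset_closure hz)
      simp only [RCLike.re_to_complex] at this
      simp only [Complex.sub_re, Complex.ofReal_re]; linarith⟩
    simp only [Complex.sub_re, Complex.ofReal_re] at this
    simp only [RCLike.re_to_complex] at hfw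
    have hfx : (f x).re = κ * (f y).re + (1 - κ) * (f w).re := by
      rw [hx, map_add, ← algebraMap_smul ℂ κ y, ← algebraMap_smul ℂ (1 - κ) w]
      simp only [map_smul, smul_eq_mul, Complex.add_re, Complex.coe_algebraMap,
        Complex.re_ofReal_mul]
    have hCκ : C * κ = 1 := mul_inv_cancel₀ hC0.ne'
    have e : C * ((f x).re - u) = (f y).re - u + (C - 1) * ((f w).re - u) := by
      rw [hfx]; linear_combination ((f y).re - (f w).re) * hCκ
    have : (C - 1) * ((f w).re - u) < 0 :=
      mul_neg_of_pos_of_neg (by linarith) (by linarith)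
    linarith

/-- A holomorphic self-map with relatively compact image contracts strip closeness. -/
lemma exists_contraction [NormedSpace ℝ E] {Ω K : Set E} (hΩo : IsOpen Ω) (hΩc : Convex ℝ Ω)
    (hK : IsCompact K) (hKΩ : K ⊆ Ω)
    {f : E → E} (hf : DifferentiableOn ℂ f Ω) (hm : MapsTo f Ω K) :
    ∃ q : ℝ, 0 ≤ q ∧ q < 1 ∧ ∀ n, ∀ x ∈ Ω, ∀ y ∈ Ω, StripClose Ω (q ^ n) (f^[n] x) (f^[n] y) := by
  obtain ⟨C, hC, hH⟩ := exists_harnack hΩo hΩc hK hKΩ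
  have hC0 : 0 < C := by linarith
  have hc1 : C⁻¹ < 1 := inv_lt_one_of_one_lt₀ hC
  have hc0 : 0 < C⁻¹ := by positivity
  have hCc : C⁻¹ * C = 1 := inv_mul_cancel₀ hC0.ne'
  set c := C⁻¹
  refine ⟨1 - c, by linarith, by linarith, fun n => ?_⟩
  have hmΩ : MapsTo f Ω Ω := fun x hx => hKΩ (hm hx)
  induction n with
  | zero =>
    intro x hx y hy h hh
    have h1 := hh.2 x hx
    have h2 := hh.2 y hy
    simp only [Function.iterate_zero, id, pow_zero, abs_le]
    constructor <;> linarith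
  | succ n ih =>
    intro x hx y hy h hh
    set p := f x
    have hpK : p ∈ K := hm hx
    have hlow : ∀ z ∈ Ω, c * (h p).re ≤ (h (f z)).re ∧ c * (1 - (h p).re) ≤ 1 - (h (f z)).re := by
      intro z hz
      have e1 := (hH h hh.holNonneg _ (hm hz) p hpK).1
      have e2 := (hH _ hh.one_sub_holNonneg _ (hm hz) p hpK).1
      simp only [Complex.sub_re, Complex.one_re] at e2
      have a1 := mul_le_mul_of_nonneg_left e1 hc0.le
      have a2 := mul_le_mul_of_nonneg_left e2 hc0.le
      rw [← mul_assoc, hCc, one_mul] at a1 a2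
      exact ⟨a1, a2⟩
    have key := ih x hx y hy
      (fun z => (h (f z) - ((c * (h p).re : ℝ) : ℂ)) * ((1 - c : ℝ) : ℂ)⁻¹)
      ⟨((hh.1.comp hf hmΩ).sub_const _).mul_const _, fun z hz => by
        obtain ⟨e1, e2⟩ := hlow z hz
        rw [← Complex.ofReal_inv, Complex.re_mul_ofReal, Complex.sub_re, Complex.ofReal_re,
          ← div_eq_mul_inv]
        constructor
        · apply div_nonneg <;> linarith
        · rw [div_le_one (by linarith)]; linarith⟩
    simp only [← Complex.ofReal_inv, Complex.re_mul_ofReal, Complex.sub_re, Complex.ofReal_re]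
      at key
    rw [← sub_mul, sub_sub_sub_cancel_right, abs_mul, abs_of_nonneg (by
      rw [inv_nonneg]; linarith : 0 ≤ (1 - c)⁻¹), ← div_eq_mul_inv, div_le_iff₀ (by linarith)] at key
    rw [Function.iterate_succ_apply', Function.iterate_succ_apply', pow_succ]
    exact key

/-- A holomorphic self-map of a bounded convex domain with relatively compact image has a fixed
point in the closure of every orbit. -/
lemma exists_fixed_of_relatively_compact [NormedSpace ℝ E] {Ω K : Set E} (hΩo : IsOpen Ω)
    (hΩc : Convex ℝ Ω) (hΩb : Bornology.IsBounded Ω) (hK : IsCompact K) (hKΩ : K ⊆ Ω)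
    {f : E → E} (hf : DifferentiableOn ℂ f Ω) (hm : MapsTo f Ω K) {z : E} (hz : z ∈ Ω) :
    ∃ w ∈ K, f w = w ∧ w ∈ closure (range fun n => f^[n] z) := by
  obtain ⟨q, hq0, hq1, hq⟩ := exists_contraction hΩo hΩc hK hKΩ hf hm
  obtain ⟨M, hM, hΩM⟩ := hΩb.exists_pos_norm_le
  have hmΩ : MapsTo f Ω Ω := fun x hx => hKΩ (hm hx)
  obtain ⟨w, hw, φ, hφ, hlim⟩ := hK.tendsto_subseq (x := fun n => f^[n + 1] z) (fun n => by
    rw [Function.iterate_succ_apply']; exact hm (hmΩ.iterate n hz))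
  have hcont : ContinuousAt f w := (hf.differentiableAt (hΩo.mem_nhds (hKΩ hw))).continuousAt
  have h1 : Tendsto (fun k => f (f^[φ k + 1] z) - f^[φ k + 1] z) atTop (𝓝 (f w - w)) :=
    (hcont.tendsto.comp hlim).sub hlim
  have h2 : Tendsto (fun k => f (f^[φ k + 1] z) - f^[φ k + 1] z) atTop (𝓝 0) := by
    have h3 : Tendsto (fun k => 2 * M * q ^ (φ k + 1)) atTop (𝓝 0) := by
      have := ((tendsto_pow_atTop_nhds_zero_of_lt_one hq0 hq1).comp
        ((tendsto_add_atTop_nat 1).comp hφ.tendsto_atTop)).const_mul (2 * M)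
      simpa using this
    refine squeeze_zero_norm (fun k => ?_) h3
    have := (hq (φ k + 1) (f z) (hmΩ hz) z hz).norm_sub_le hM hΩM
    rwa [← Function.iterate_succ_apply, Function.iterate_succ_apply'] at this
  refine ⟨w, hw, sub_eq_zero.mp (tendsto_nhds_unique h1 h2), ?_⟩
  exact mem_closure_of_tendsto hlim (Eventually.of_forall fun k => ⟨φ k + 1, rfl⟩)

end Convex

section Dynamics

lemma iterate_leftInvOn {α : Type*} {s : Set α} {f g : α → α} (hf : MapsTo f s s)
    (hgf : ∀ x ∈ s, g (f x) = x) (n : ℕ) : ∀ x ∈ s, g^[n] (f^[n] x) = x := by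
  induction n with
  | zero => intro x _; rfl
  | succ n ih =>
    intro x hx
    rw [Function.iterate_succ_apply, Function.iterate_succ_apply', hgf _ (hf.iterate n hx), ih x hx]

variable {E : Type*} [NormedAddCommGroup E] [NormedSpace ℂ E] [NormedSpace ℝ E]
  [IsScalarTower ℝ ℂ E] [ProperSpace E]

/-- A holomorphic self-map of a bounded convex domain with a relatively compact orbit has a fixed
point. -/
lemma exists_fixed_of_orbit_subset {Ω A : Set E} (hΩo : IsOpen Ω) (hΩc : Convex ℝ Ω)
    (hΩb : Bornology.IsBounded Ω) {f : E → E} (hf : DifferentiableOn ℂ f Ω) (hm : MapsTo f Ω Ω)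
    (hA : IsCompact A) (hAΩ : A ⊆ Ω) {z : E} (hz : ∀ j, f^[j] z ∈ A) : ∃ w ∈ Ω, f w = w := by
  have hzΩ : z ∈ Ω := hAΩ (hz 0)
  obtain ⟨ε, hε, hball⟩ := exists_ball_lineMap_subset hΩo hΩc hA hAΩ
  obtain ⟨D, hD⟩ := Metric.isBounded_iff.mp hA.isBounded
  have hD0 : 0 ≤ D := dist_nonneg.trans (hD (hz 0) (hz 0))
  set U : Set ℂ := thickening (ε / (D + 1)) (segment ℝ 0 1) with hU
  have hUo : IsOpen U := isOpen_thickening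
  have hUc : Convex ℝ U := (convex_segment 0 1).thickening _
  have hUsub : ({0, 1} : Set ℂ) ⊆ U := by
    rintro x (rfl | rfl)
    · exact self_subset_thickening (by positivity) _ (left_mem_segment ℝ _ _)
    · exact self_subset_thickening (by positivity) _ (right_mem_segment ℝ _ _)
  obtain ⟨C₀, hC₀, hH⟩ := exists_harnack hUo hUc (Set.toFinite {0, 1}).isCompact hUsub
  obtain ⟨Q, hQ, hQΩ, hQmem⟩ := exists_compact_of_harnack hΩo hΩc hΩb hA hAΩ hC₀
  set S : Set E := {x | ∀ᶠ j in atTop, ∃ φ : ℂ → E, DifferentiableOn ℂ φ U ∧ MapsTo φ U Ω ∧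
    φ 0 = f^[j] z ∧ φ 1 = x} with hS
  have hSQ : S ⊆ Q := by
    intro x hx
    obtain ⟨j, φ, hφ, hφm, h0, h1⟩ := Eventually.exists hx
    refine hQmem (f^[j] z) (hz j) x fun h hh => ?_
    rw [← h0, ← h1]
    exact (hH _ (hh.comp hφ hφm) 1 (by simp) 0 (by simp)).1
  have hSf : MapsTo f S S := by
    intro x hx
    obtain ⟨J, hJ⟩ := eventually_atTop.mp hx
    refine eventually_atTop.mpr ⟨J + 1, fun i hi => ?_⟩
    obtain ⟨j, rfl⟩ : ∃ j, i = j + 1 := ⟨i - 1, by omega⟩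
    obtain ⟨φ, hφ, hφm, h0, h1⟩ := hJ j (by omega)
    refine ⟨fun ζ => f (φ ζ), hf.comp hφ hφm, hm.comp hφm, ?_, congrArg f h1⟩
    change f (φ 0) = _
    rw [h0, Function.iterate_succ_apply']
  have hSc : Convex ℝ S := by
    intro x hx y hy a b ha hb hab
    filter_upwards [hx, hy] with j ⟨φ, hφ, hφm, h0, h1⟩ ⟨ψ, hψ, hψm, k0, k1⟩
    refine ⟨fun ζ => a • φ ζ + b • ψ ζ, ?_, fun ζ hζ => hΩc (hφm hζ) (hψm hζ) ha hb hab, ?_, ?_⟩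
    · simp only [← algebraMap_smul ℂ a, ← algebraMap_smul ℂ b]
      exact (hφ.const_smul _).add (hψ.const_smul _)
    · change a • φ 0 + b • ψ 0 = _
      rw [h0, k0, ← add_smul, hab, one_smul]
    · change a • φ 1 + b • ψ 1 = _
      rw [h1, k1]
  have hzS : z ∈ S := by
    refine Eventually.of_forall fun j => ⟨fun ζ => f^[j] z + ζ • (z - f^[j] z), by fun_prop,
      fun ζ hζ => ?_, by simp, by simp⟩
    obtain ⟨s, hs, hζs⟩ := mem_thickening_iff.mp hζ
    rw [segment_eq_image_lineMap] at hs
    obtain ⟨t, ht, rfl⟩ := hs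
    apply hball _ (hz j) z (hz 0) t ht
    have e : f^[j] z + ζ • (z - f^[j] z) - AffineMap.lineMap (f^[j] z) z t =
        (ζ - AffineMap.lineMap (0 : ℂ) 1 t) • (z - f^[j] z) := by
      rw [AffineMap.lineMap_apply_module', AffineMap.lineMap_apply_module',
        ← algebraMap_smul ℂ t (z - f^[j] z)]
      simp only [sub_smul, sub_zero, mul_one, add_zero, Complex.real_smul,
        Complex.coe_algebraMap]
      abel
    rw [mem_ball, dist_eq_norm, e, norm_smul, ← dist_eq_norm, ← dist_eq_norm]
    have h1 : dist z (f^[j] z) ≤ D := hD (hz 0) (hz j)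
    rw [lt_div_iff₀ (by positivity)] at hζs
    nlinarith [dist_nonneg (x := ζ) (y := AffineMap.lineMap (0 : ℂ) 1 t)]
  have hfix : ∀ t : ℝ, 0 < t → t < 1 → ∃ w ∈ Q, (1 - t) • f w + t • z = w := by
    intro t ht0 ht1
    obtain ⟨w, -, hw, hwcl⟩ := exists_fixed_of_relatively_compact hΩo hΩc hΩb
      (K := (fun x => (1 - t) • x + t • z) '' closure Ω) (f := fun x => (1 - t) • f x + t • z)
      (hΩb.isCompact_closure.image (by fun_prop)) (by
        rintro _ ⟨x, hx, rfl⟩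
        have := hΩc.combo_closure_interior_mem_interior hx (by rwa [hΩo.interior_eq])
          (by linarith : 0 ≤ 1 - t) ht0 (by ring)
        rwa [hΩo.interior_eq] at this) (by
        simp only [← algebraMap_smul ℂ (1 - t)]
        exact (hf.const_smul _).add_const _) (fun x hx => ⟨f x, subset_closure (hm hx), rfl⟩) hzΩ
    refine ⟨w, closure_minimal ?_ hQ.isClosed hwcl, hw⟩
    rintro _ ⟨n, rfl⟩
    refine hSQ (MapsTo.iterate (s := S) (fun x hx => ?_) n hzS)
    exact hSc (hSf hx) hzS (by linarith) ht0.le (by ring)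
  choose w hwQ hw using fun n : ℕ => hfix (1 / ((n : ℝ) + 2)) (by positivity) (by
    rw [div_lt_one (by positivity)]; linarith [n.cast_nonneg (α := ℝ)])
  obtain ⟨v, hvQ, φ, hφ, hlim⟩ := hQ.tendsto_subseq hwQ
  refine ⟨v, hQΩ hvQ, ?_⟩
  have hcont : ContinuousAt f v := (hf.differentiableAt (hΩo.mem_nhds (hQΩ hvQ))).continuousAt
  have ht : Tendsto (fun k => 1 / (((φ k : ℕ) : ℝ) + 2)) atTop (𝓝 0) :=
    Tendsto.div_atTop tendsto_const_nhds (tendsto_atTop_add_const_right _ _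
      (tendsto_natCast_atTop_atTop.comp hφ.tendsto_atTop))
  have h1 := ((ht.const_sub 1).smul (hcont.tendsto.comp hlim)).add (ht.smul_const z)
  rw [sub_zero, one_smul, zero_smul, add_zero] at h1
  refine tendsto_nhds_unique (h1.congr fun k => ?_) hlim
  exact hw (φ k)

/-- If the iterates of an automorphism are not compactly divergent, every orbit is relatively
compact. -/
lemma exists_compact_of_frequently {Ω K : Set E} (hΩo : IsOpen Ω) (hΩc : Convex ℝ Ω)
    (hΩb : Bornology.IsBounded Ω) {f g : E → E} (hf : DifferentiableOn ℂ f Ω)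
    (hfm : MapsTo f Ω Ω) (hg : DifferentiableOn ℂ g Ω) (hgm : MapsTo g Ω Ω)
    (hgf : ∀ x ∈ Ω, g (f x) = x) (hK : IsCompact K) (hKΩ : K ⊆ Ω)
    (hfreq : ∃ᶠ j in atTop, (f^[j] '' K ∩ K).Nonempty) {z : E} (hz : z ∈ Ω) :
    ∃ A, IsCompact A ∧ A ⊆ Ω ∧ ∀ j, f^[j] z ∈ A := by
  have hinv := iterate_leftInvOn hfm hgf
  -- the orbit of `z` visits a compact set `Q` infinitely often
  have hK' : insert z K ⊆ Ω := insert_subset hz hKΩ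
  obtain ⟨C, hC, hH⟩ := exists_harnack hΩo hΩc (hK.insert z) hK'
  obtain ⟨Q, hQ, hQΩ, hQmem⟩ := exists_compact_of_harnack hΩo hΩc hΩb hK hKΩ hC
  have hfreqQ : ∃ᶠ j in atTop, f^[j] z ∈ Q := by
    refine hfreq.mono ?_
    rintro j ⟨_, ⟨a, ha, rfl⟩, hb⟩
    refine hQmem _ hb _ fun h hh => ?_
    exact (hH _ (hh.comp (hf.iterate hfm j) (hfm.iterate j)) z (mem_insert _ _) a
      (mem_insert_of_mem _ ha)).1
  -- a compact ball around `z` absorbing all points close to `z`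
  obtain ⟨M, hM, hΩM⟩ := hΩb.exists_pos_norm_le
  obtain ⟨R, hR, hball⟩ := Metric.nhds_basis_closedBall.mem_iff.mp (hΩo.mem_nhds hz)
  set r : ℝ := R / (2 * M) with hr
  have hr0 : 0 < r := by positivity
  have hclose : ∀ x, StripClose Ω r x z → x ∈ closedBall z R := by
    intro x hx
    have := hx.norm_sub_le hM hΩM
    rw [hr, mul_div_cancel₀ _ (by positivity)] at this
    rwa [mem_closedBall, dist_eq_norm]
  have hback : ∀ m n, m ≤ n → StripClose Ω r (f^[n] z) (f^[m] z) →
      StripClose Ω r (f^[n - m] z) z := by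
    intro m n hmn h
    have := h.map (hg.iterate hgm m) (hgm.iterate m)
    rw [hinv m z hz] at this
    rwa [← Nat.add_sub_of_le hmn, Function.iterate_add_apply, hinv m _ (hfm.iterate _ hz)] at this
  -- recurrence
  have hrec : ∀ k : ℕ, ∃ n ≥ k, StripClose Ω r (f^[n] z) z := by
    obtain ⟨φ, hφ, hφQ⟩ := extraction_of_frequently_atTop hfreqQ
    obtain ⟨y, -, ψ, hψ, hlim⟩ := hQ.tendsto_subseq hφQ
    obtain ⟨δ, hδ, hδr⟩ := exists_equicontinuous hΩo hQ hQΩ hr0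
    obtain ⟨N, hN⟩ := Metric.cauchySeq_iff'.mp hlim.cauchySeq δ hδ
    intro k
    have hmono := hφ.comp hψ
    have hge : k + φ (ψ N) ≤ φ (ψ (k + N)) := hmono.add_le_nat k N
    refine ⟨φ (ψ (k + N)) - φ (ψ N), by omega, hback _ _ (by omega) ?_⟩
    exact hδr _ (hφQ _) _ (hφQ _) (hN (k + N) (by omega))
  -- bounded return times
  obtain ⟨δ, hδ, hδr⟩ := exists_equicontinuous hΩo (isCompact_closedBall z R) hball hr0
  obtain ⟨N, hN⟩ : ∃ N, ∀ n, 1 ≤ n → f^[n] z ∈ closedBall z R →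
      ∃ m, 1 ≤ m ∧ m ≤ N ∧ StripClose Ω r (f^[n] z) (f^[m] z) := by
    set T : Set ℕ := {n | 1 ≤ n ∧ f^[n] z ∈ closedBall z R} with hT
    have htb : TotallyBounded ((fun n => f^[n] z) '' T) :=
      (isCompact_closedBall z R).totallyBounded.subset (by rintro _ ⟨n, hn, rfl⟩; exact hn.2)
    obtain ⟨t, htT, htfin, hcov⟩ := Metric.finite_approx_of_totallyBounded htb δ hδ
    obtain ⟨s, hsT, hsfin, rfl⟩ := (Set.exists_subset_image_finite_and
      (p := fun t' => t' = t)).mp ⟨t, htT, htfin, rfl⟩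
    obtain ⟨N, hN⟩ := hsfin.bddAbove
    refine ⟨N, fun n hn hnB => ?_⟩
    obtain ⟨_, hy, hdist⟩ := mem_iUnion₂.mp (hcov ⟨n, ⟨hn, hnB⟩, rfl⟩)
    obtain ⟨m, hm, rfl⟩ := hy
    exact ⟨m, (hsT hm).1, hN hm, hδr _ hnB _ (hsT hm).2 hdist⟩
  have hgap : ∀ k : ℕ, ∃ i ≤ N, StripClose Ω r (f^[k + i] z) z := by
    intro k
    classical
    have hex := hrec k
    obtain ⟨hk, hc⟩ := Nat.find_spec hex
    have hmin := fun m (hm : m < Nat.find hex) => Nat.find_min hex hm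
    set n := Nat.find hex
    refine ⟨n - k, ?_, by rwa [Nat.add_sub_of_le hk]⟩
    by_contra hlt
    obtain ⟨m, hm1, hmN, hcl⟩ := hN n (by omega) (hclose _ hc)
    exact hmin (n - m) (by omega) ⟨by omega, hback m n (by omega) hcl⟩
  refine ⟨⋃ i ∈ Finset.range (N + 1), g^[i] '' closedBall z R,
    (Finset.range (N + 1)).isCompact_biUnion fun i _ => (isCompact_closedBall z R).image_of_continuousOn
      ((hg.iterate hgm i).continuousOn.mono hball),
    iUnion₂_subset fun i _ => ?_, fun k => ?_⟩
  · rintro _ ⟨x, hx, rfl⟩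
    exact hgm.iterate i (hball hx)
  · obtain ⟨i, hi, hc⟩ := hgap k
    refine mem_iUnion₂.mpr ⟨i, by simpa [Nat.lt_succ_iff] using hi, f^[k + i] z, hclose _ hc, ?_⟩
    rw [add_comm, Function.iterate_add_apply, hinv i _ (hfm.iterate k hz)]

end Dynamics

section Smoothstep

/-- The polynomial `3w² - 2w³`, with superattracting fixed points `0` and `1`. -/
def smoothstep (w : ℂ) : ℂ := 3 * w ^ 2 - 2 * w ^ 3

lemma differentiable_smoothstep_iterate (n : ℕ) : Differentiable ℂ (smoothstep^[n]) := by
  have h : Differentiable ℂ smoothstep := by unfold smoothstep; fun_prop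
  exact h.iterate n

lemma smoothstep_iterate_one_sub (n : ℕ) (w : ℂ) :
    smoothstep^[n] (1 - w) = 1 - smoothstep^[n] w := by
  induction n with
  | zero => rfl
  | succ n ih =>
    rw [Function.iterate_succ_apply', ih, Function.iterate_succ_apply']
    unfold smoothstep; ring

lemma norm_smoothstep_iterate_le {w : ℂ} (hw : ‖w‖ ≤ 1 / 4) (n : ℕ) :
    ‖smoothstep^[n] w‖ ≤ (7 / 8) ^ n * (1 / 4) := by
  induction n with
  | zero => simpa using hw
  | succ n ih =>
    rw [Function.iterate_succ_apply']
    set v := smoothstep^[n] w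
    have hv : ‖v‖ ≤ 1 / 4 := ih.trans (by
      have : (7 / 8 : ℝ) ^ n ≤ 1 := pow_le_one₀ (by norm_num) (by norm_num)
      linarith)
    have e : smoothstep v = v * v * (3 - 2 * v) := by unfold smoothstep; ring
    have h3 : ‖3 - 2 * v‖ ≤ 7 / 2 := (norm_sub_le _ _).trans (by simp; linarith)
    rw [e, norm_mul, norm_mul, pow_succ]
    calc ‖v‖ * ‖v‖ * ‖3 - 2 * v‖ ≤ ‖v‖ * (1 / 4) * (7 / 2) := by gcongr
      _ ≤ _ := by linarith

lemma norm_one_sub_smoothstep_iterate_le {w : ℂ} (hw : ‖w - 1‖ ≤ 1 / 4) (n : ℕ) :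
    ‖1 - smoothstep^[n] w‖ ≤ (7 / 8) ^ n * (1 / 4) := by
  rw [← smoothstep_iterate_one_sub]
  exact norm_smoothstep_iterate_le (by rwa [norm_sub_rev]) n

end Smoothstep

section Hull

variable {n : ℕ} {Ω K : Set (CSpace n)}

lemma norm_le_of_mem_OHull {x : CSpace n} (hx : x ∈ OHull Ω K) {f : CSpace n → ℂ}
    (hf : DifferentiableOn ℂ f Ω) {B : ℝ} (hB : 0 ≤ B) (h : ∀ y ∈ K, ‖f y‖ ≤ B) : ‖f x‖ ≤ B :=
  (hx.2 f hf).trans (Real.iSup_le (fun y => h y y.2) hB)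

lemma bddAbove_range_norm (hK : IsCompact K) (hKΩ : K ⊆ Ω) {f : CSpace n → ℂ}
    (hf : DifferentiableOn ℂ f Ω) : BddAbove (range fun y : K => ‖f y‖) := by
  obtain ⟨B, hB⟩ := hK.exists_bound_of_continuousOn (hf.continuousOn.mono hKΩ)
  exact ⟨B, by rintro _ ⟨y, rfl⟩; exact hB y y.2⟩

lemma subset_OHull (hK : IsCompact K) (hKΩ : K ⊆ Ω) : K ⊆ OHull Ω K := fun x hx =>
  ⟨hKΩ hx, fun _ hf => le_ciSup (bddAbove_range_norm hK hKΩ hf) (⟨x, hx⟩ : K)⟩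

/-- A point outside a compact holomorphically convex set is strongly separated from it. -/
lemma exists_peak_of_notMem (hK : IsCompact K) (hKΩ : K ⊆ Ω) (hconv : OHull Ω K = K)
    {x : CSpace n} (hx : x ∈ Ω) (hxK : x ∉ K) :
    ∃ f : CSpace n → ℂ, DifferentiableOn ℂ f Ω ∧ f x = 1 ∧ ∀ y ∈ K, ‖f y‖ ≤ 1 / 4 := by
  rw [← hconv] at hxK
  obtain ⟨f, hf, hlt⟩ : ∃ f : CSpace n → ℂ, DifferentiableOn ℂ f Ω ∧
      (⨆ y : K, ‖f ↑y‖) < ‖f x‖ := by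
    by_contra! h
    exact hxK ⟨hx, h⟩
  set s := ⨆ y : K, ‖f ↑y‖
  have hs0 : 0 ≤ s := Real.iSup_nonneg fun _ => norm_nonneg _
  have hfx : 0 < ‖f x‖ := hs0.trans_lt hlt
  obtain ⟨m, hm⟩ := exists_pow_lt_of_lt_one (by norm_num : (0 : ℝ) < 1 / 4)
    ((div_lt_one hfx).mpr hlt)
  refine ⟨fun z => (f z / f x) ^ m, ?_, ?_, fun y hy => ?_⟩
  · simp only [div_eq_mul_inv]
    exact (hf.mul_const _).fun_pow m
  · simp [div_self (norm_pos_iff.mp hfx)]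
  · have : ‖f y‖ ≤ s := le_ciSup (bddAbove_range_norm hK hKΩ hf) (⟨y, hy⟩ : K)
    rw [norm_pow, norm_div]
    refine le_trans ?_ hm.le
    gcongr

/-- Kallin's lemma for two compact sets separated by a holomorphic function. -/
lemma OHull_union_eq {K L : Set (CSpace n)} (hK : IsCompact K) (hKΩ : K ⊆ Ω)
    (hKc : OHull Ω K = K) (hL : IsCompact L) (hLΩ : L ⊆ Ω) (hLc : OHull Ω L = L)
    {g : CSpace n → ℂ} (hg : DifferentiableOn ℂ g Ω) (hgK : ∀ y ∈ K, ‖g y‖ ≤ 1 / 4)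
    (hgL : ∀ y ∈ L, ‖g y - 1‖ ≤ 1 / 4) : OHull Ω (L ∪ K) = L ∪ K := by
  refine Subset.antisymm (fun x hx => ?_) (subset_OHull (hL.union hK) (union_subset hLΩ hKΩ))
  by_contra hxn
  rw [mem_union, not_or] at hxn
  obtain ⟨a, ha, hax, haK⟩ := exists_peak_of_notMem hK hKΩ hKc hx.1 hxn.2
  obtain ⟨b, hb, hbx, hbL⟩ := exists_peak_of_notMem hL hLΩ hLc hx.1 hxn.1
  obtain ⟨A, hA⟩ := hL.exists_bound_of_continuousOn (ha.continuousOn.mono hLΩ)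
  obtain ⟨B, hB⟩ := hK.exists_bound_of_continuousOn (hb.continuousOn.mono hKΩ)
  obtain ⟨m, hm⟩ := exists_pow_lt_of_lt_one (by positivity : (0 : ℝ) < 1 / (1 + |A| + |B|))
    (by norm_num : (7 / 8 : ℝ) < 1)
  rw [lt_div_iff₀ (by positivity)] at hm
  set δ : ℝ := (7 / 8) ^ m with hδ
  have hδ0 : 0 < δ := by positivity
  have hδ1 : δ ≤ 1 := pow_le_one₀ (by norm_num) (by norm_num)
  set P : CSpace n → ℂ := fun z => smoothstep^[m] (g z) with hP
  have hPd : DifferentiableOn ℂ P Ω :=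
    (differentiable_smoothstep_iterate m).comp_differentiableOn hg
  have hPK : ∀ y ∈ K, ‖P y‖ ≤ δ * (1 / 4) := fun y hy => norm_smoothstep_iterate_le (hgK y hy) m
  have hPL : ∀ y ∈ L, ‖1 - P y‖ ≤ δ * (1 / 4) := fun y hy =>
    norm_one_sub_smoothstep_iterate_le (hgL y hy) m
  have one_le : ∀ w : ℂ, ‖w‖ ≤ δ * (1 / 4) → ‖1 - w‖ ≤ 5 / 4 := fun w hw =>
    (norm_sub_le _ _).trans (by rw [norm_one]; linarith)
  have hA' : δ * |A| ≤ 1 := by nlinarith [abs_nonneg B, abs_nonneg A]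
  have hB' : δ * |B| ≤ 1 := by nlinarith [abs_nonneg B, abs_nonneg A]
  have h1 : ‖a x * (1 - P x)‖ ≤ 3 / 8 := by
    refine norm_le_of_mem_OHull hx (ha.fun_mul (hPd.const_sub 1)) (by norm_num) fun y hy => ?_
    rw [norm_mul]
    rcases hy with hy | hy
    · calc ‖a y‖ * ‖1 - P y‖ ≤ |A| * (δ * (1 / 4)) := by
            gcongr
            · exact (hA y hy).trans (le_abs_self A)
            · exact hPL y hy
        _ ≤ 3 / 8 := by linarith
    · calc ‖a y‖ * ‖1 - P y‖ ≤ 1 / 4 * (5 / 4) := by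
            gcongr
            · exact haK y hy
            · exact one_le _ (hPK y hy)
        _ ≤ 3 / 8 := by norm_num
  have h2 : ‖b x * P x‖ ≤ 3 / 8 := by
    refine norm_le_of_mem_OHull hx (hb.fun_mul hPd) (by norm_num) fun y hy => ?_
    rw [norm_mul]
    rcases hy with hy | hy
    · calc ‖b y‖ * ‖P y‖ ≤ 1 / 4 * (5 / 4) := by
            gcongr
            · exact hbL y hy
            · simpa using one_le _ (hPL y hy)
        _ ≤ 3 / 8 := by norm_num
    · calc ‖b y‖ * ‖P y‖ ≤ |B| * (δ * (1 / 4)) := by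
            gcongr
            · exact (hB y hy).trans (le_abs_self B)
            · exact hPK y hy
        _ ≤ 3 / 8 := by linarith
  rw [hax, one_mul] at h1
  rw [hbx, one_mul] at h2
  have h3 := norm_add_le (1 - P x) (P x)
  rw [sub_add_cancel, norm_one] at h3
  linarith

lemma OHull_singleton {x : CSpace n} (hx : x ∈ Ω) : OHull Ω {x} = {x} := by
  refine Subset.antisymm (fun y hy => ?_)
    (subset_OHull isCompact_singleton (singleton_subset_iff.mpr hx))
  rw [mem_singleton_iff]
  ext i
  have := norm_le_of_mem_OHull hy (f := fun z => z i - x i) (by fun_prop) le_rfl (by simp)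
  exact sub_eq_zero.mp (norm_le_zero_iff.mp this)

/-- Images of holomorphically convex sets under automorphisms are holomorphically convex. -/
lemma OHull_image_eq {f g : CSpace n → CSpace n} (hK : IsCompact K) (hKΩ : K ⊆ Ω)
    (hKc : OHull Ω K = K) (hf : DifferentiableOn ℂ f Ω) (hfm : MapsTo f Ω Ω)
    (hg : DifferentiableOn ℂ g Ω) (hgm : MapsTo g Ω Ω) (hgf : ∀ x ∈ Ω, g (f x) = x)
    (hfg : ∀ x ∈ Ω, f (g x) = x) : OHull Ω (f '' K) = f '' K := by
  refine Subset.antisymm (fun x hx => ?_) (subset_OHull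
    (hK.image_of_continuousOn (hf.continuousOn.mono hKΩ)) (hfm.mono_left hKΩ).image_subset)
  refine ⟨g x, ?_, hfg x hx.1⟩
  rw [← hKc]
  refine ⟨hgm hx.1, fun h hh => ?_⟩
  refine norm_le_of_mem_OHull hx (hh.comp hg hgm) (Real.iSup_nonneg fun _ => norm_nonneg _) ?_
  rintro _ ⟨y, hy, rfl⟩
  rw [Function.comp_apply, hgf y (hKΩ hy)]
  exact le_ciSup (bddAbove_range_norm hK hKΩ hh) (⟨y, hy⟩ : K)

/-- A compactly divergent automorphism pushes compact sets towards a peak point of the boundary. -/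
lemma exists_separating_of_compactly_divergent (hΩo : IsOpen Ω) (hΩc : Convex ℝ Ω)
    (hΩb : Bornology.IsBounded Ω) {f : CSpace n → CSpace n} (hf : DifferentiableOn ℂ f Ω)
    (hfm : MapsTo f Ω Ω)
    (hdiv : ∀ K : Set (CSpace n), IsCompact K → K ⊆ Ω → ∃ N : ℕ, ∀ j ≥ N, (f^[j] '' K) ∩ K = ∅)
    (hK : IsCompact K) (hKΩ : K ⊆ Ω) (hne : K.Nonempty) :
    ∃ j, 1 ≤ j ∧ ∃ g : CSpace n → ℂ, DifferentiableOn ℂ g Ω ∧ (∀ y ∈ K, ‖g y‖ ≤ 1 / 4) ∧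
      ∀ y ∈ f^[j] '' K, ‖g y - 1‖ ≤ 1 / 4 := by
  obtain ⟨z, hzK⟩ := hne
  have hz : z ∈ Ω := hKΩ hzK
  obtain ⟨p, -, φ, hφ, hlim⟩ := hΩb.isCompact_closure.tendsto_subseq (x := fun j => f^[j] z)
    fun j => subset_closure (hfm.iterate j hz)
  have hp : p ∉ Ω := by
    intro hp
    obtain ⟨R, hR, hball⟩ := Metric.nhds_basis_closedBall.mem_iff.mp (hΩo.mem_nhds hp)
    obtain ⟨N, hN⟩ := hdiv _ ((isCompact_closedBall p R).insert z) (insert_subset hz hball)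
    obtain ⟨k, hk, hkN⟩ := ((hlim.eventually (closedBall_mem_nhds p hR)).and
      (hφ.tendsto_atTop.eventually_ge_atTop N)).exists
    exact (hN _ hkN).subset ⟨⟨z, mem_insert _ _, rfl⟩, mem_insert_of_mem _ hk⟩
  obtain ⟨ℓ, hℓ⟩ := RCLike.geometric_hahn_banach_open_point (𝕜 := ℂ) hΩc hΩo hp
  simp only [RCLike.re_to_complex] at hℓ
  set h : CSpace n → ℂ := fun x => ℓ p - ℓ x with hh
  have hhd : Differentiable ℂ h := by rw [hh]; fun_prop
  have hpos : ∀ x ∈ Ω, 0 < (h x).re := fun x hx => by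
    simp only [hh, Complex.sub_re]; linarith [hℓ x hx]
  have hhn : HolNonneg Ω h := ⟨hhd.differentiableOn, fun x hx => (hpos x hx).le⟩
  obtain ⟨C, hC, hH⟩ := exists_harnack hΩo hΩc hK hKΩ
  obtain ⟨x₀, hx₀, hmin⟩ := hK.exists_isMinOn ⟨z, hzK⟩
    (Complex.continuous_re.comp hhd.continuous).continuousOn
  have hc := hpos x₀ (hKΩ hx₀)
  set c := (h x₀).re
  obtain ⟨m, hm⟩ := exists_nat_gt (3 / c)
  rw [div_lt_iff₀ hc] at hm
  have hm0 : (0 : ℝ) < m := by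
    by_contra! hm'
    nlinarith
  have hh0 : Tendsto (fun k => h (f^[φ k] z)) atTop (𝓝 0) := by
    have := (hhd.continuous.tendsto p).comp hlim
    rwa [show h p = 0 from sub_self _] at this
  obtain ⟨k, hk, hk1⟩ := ((Metric.tendsto_nhds.mp hh0 (1 / (8 * m * C)) (by positivity)).and
      (hφ.tendsto_atTop.eventually_ge_atTop 1)).exists
  rw [dist_zero_right, lt_div_iff₀ (by positivity)] at hk
  refine ⟨φ k, hk1, fun x => Complex.exp (-(m * h x)), by fun_prop, fun y hy => ?_, ?_⟩
  · have hcy : c ≤ (h y).re := hmin hy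
    rw [Complex.norm_exp, Complex.neg_re, ← Complex.ofReal_natCast, Complex.re_ofReal_mul,
      Real.exp_neg, one_div]
    apply inv_anti₀ (by norm_num)
    have := Real.add_one_le_exp ((m : ℝ) * (h y).re)
    nlinarith
  · rintro _ ⟨x, hx, rfl⟩
    have hb := (hH _ (hhn.comp (hf.iterate hfm (φ k)) (hfm.iterate _)) z hzK x hx).2
    have hsmall : ‖-((m : ℂ) * h (f^[φ k] x))‖ ≤ 1 / 8 := by
      rw [norm_neg, norm_mul, Complex.norm_natCast]
      nlinarith
    have := Complex.norm_exp_sub_one_le (hsmall.trans (by norm_num))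
    linarith

end Hull

/-- For an automorphism `τ` of a bounded convex domain `Ω ⋐ ℂⁿ`, the following
are equivalent: `τ` is a generalized translation; `τ` has no fixed points; the iterates of `τ`
are compactly divergent. -/
theorem stmt_11 {n : ℕ} (Ω : Set (CSpace n)) (hΩopen : IsOpen Ω) (hΩconv : Convex ℝ Ω)
    (hΩbdd : Bornology.IsBounded Ω) (hΩne : Ω.Nonempty)
    (τ : CSpace n → CSpace n) (hτdiff : DifferentiableOn ℂ τ Ω) (hτmaps : Set.MapsTo τ Ω Ω)
    (hτbij : ∃ σ : CSpace n → CSpace n, DifferentiableOn ℂ σ Ω ∧ Set.MapsTo σ Ω Ω ∧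
      (∀ x ∈ Ω, σ (τ x) = x) ∧ (∀ x ∈ Ω, τ (σ x) = x)) :
    (IsGenTranslation Ω τ ↔ ∀ x ∈ Ω, τ x ≠ x) ∧
    ((∀ x ∈ Ω, τ x ≠ x) ↔
      ∀ K : Set (CSpace n), IsCompact K → K ⊆ Ω →
        ∃ N : ℕ, ∀ j ≥ N, (τ^[j] '' K) ∩ K = ∅) := by
  obtain ⟨σ, hσdiff, hσmaps, hστ, hτσ⟩ := hτbij
  have h12 : IsGenTranslation Ω τ → ∀ x ∈ Ω, τ x ≠ x := by
    intro h x hx hfix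
    obtain ⟨j, -, hj, -⟩ := h {x} isCompact_singleton (singleton_subset_iff.mpr hx)
      (OHull_singleton hx)
    exact hj.subset ⟨⟨x, rfl, Function.iterate_fixed hfix j⟩, rfl⟩
  have h23 : (∀ x ∈ Ω, τ x ≠ x) → ∀ K : Set (CSpace n), IsCompact K → K ⊆ Ω →
      ∃ N : ℕ, ∀ j ≥ N, (τ^[j] '' K) ∩ K = ∅ := by
    intro h K hK hKΩ
    by_contra hcon
    have hfreq : ∃ᶠ j in atTop, (τ^[j] '' K ∩ K).Nonempty := by
      rw [frequently_atTop]
      intro N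
      by_contra! hN
      exact hcon ⟨N, hN⟩
    obtain ⟨z, hz⟩ := hΩne
    obtain ⟨A, hA, hAΩ, hzA⟩ := exists_compact_of_frequently hΩopen hΩconv hΩbdd hτdiff hτmaps
      hσdiff hσmaps hστ hK hKΩ hfreq hz
    obtain ⟨w, hw, hfix⟩ := exists_fixed_of_orbit_subset hΩopen hΩconv hΩbdd hτdiff hτmaps hA hAΩ
      hzA
    exact h w hw hfix
  have h31 : (∀ K : Set (CSpace n), IsCompact K → K ⊆ Ω →
      ∃ N : ℕ, ∀ j ≥ N, (τ^[j] '' K) ∩ K = ∅) → IsGenTranslation Ω τ := by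
    intro h K hK hKΩ hKc
    rcases K.eq_empty_or_nonempty with rfl | hne
    · exact ⟨1, le_rfl, by simp, by simpa using hKc⟩
    obtain ⟨j, hj, g, hg, hgK, hgL⟩ := exists_separating_of_compactly_divergent hΩopen hΩconv
      hΩbdd hτdiff hτmaps h hK hKΩ hne
    refine ⟨j, hj, ?_, ?_⟩
    · refine eq_empty_of_forall_notMem fun y hy => ?_
      have h1 := hgK y hy.2
      have h2 := hgL y hy.1
      have h3 := norm_sub_le (g y) (g y - 1)
      rw [sub_sub_cancel, norm_one] at h3
      linarith
    · have hτj := hτdiff.iterate hτmaps j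
      have hτm := hτmaps.iterate j
      exact OHull_union_eq hK hKΩ hKc
        (hK.image_of_continuousOn (hτj.continuousOn.mono hKΩ)) (hτm.mono_left hKΩ).image_subset
        (OHull_image_eq hK hKΩ hKc hτj hτm (hσdiff.iterate hσmaps j) (hσmaps.iterate j)
          (iterate_leftInvOn hτmaps hστ j) (iterate_leftInvOn hσmaps hτσ j)) hg hgK hgL
  exact ⟨⟨h12, fun h => h31 (h23 h)⟩, ⟨h23, fun h => h12 (h31 h)⟩⟩
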